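/- For every additive valuation v over a finite set M of indivisible goods and every entitlement b with 0 < b ≤ 1, it holds that 2·Pessimistic(b, v, M) ≥ APS(b, v, M). In particular, letting k be the smallest integer with b ≥ 1/k, if z = APS(b, v, M) then M can be partitioned into k disjoint bundles each of value at least z/2. -/

import Mathlib

open Finset

def IsPartition {ι : Type*} [DecidableEq ι] (M : Finset ι) {n : ℕ} (A : Fin n → Finset ι) : Prop :=
  (∀ i, A i ⊆ M) ∧ (∀ i j, i ≠ j → Disjoint (A i) (A j)) ∧ ∀ x ∈ M, ∃ i, x ∈ A i

/-- The AnyPrice share (price-based definition): the minimum over all nonnegative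
price vectors summing to 1 of the best value of an affordable bundle. -/
noncomputable def APS {ι : Type*} (b : ℝ) (v : Finset ι → ℝ) (M : Finset ι) : ℝ :=
  sInf {t : ℝ | ∃ p : ι → ℝ, (∀ j ∈ M, 0 ≤ p j) ∧ (∑ j ∈ M, p j) = 1 ∧
    t = sSup {u : ℝ | ∃ S, S ⊆ M ∧ (∑ j ∈ S, p j) ≤ b ∧ u = v S}}

/-- The pessimistic share: the maximum ℓ-out-of-d share over all positive integers
`l, d` with `l / d ≤ b`. -/
noncomputable def Pessimistic {ι : Type*} [DecidableEq ι] (b : ℝ) (v : Finset ι → ℝ) (M : Finset ι) : ℝ :=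
  sSup {t : ℝ | ∃ l d : ℕ, 0 < l ∧ 0 < d ∧ (l : ℝ) / d ≤ b ∧
    ∃ P : Fin d → Finset ι, IsPartition M P ∧
      ∀ J : Finset (Fin d), J.card = l → t ≤ v (J.biUnion P)}

/-!
Write `z = APS` and `h = z / 2`. If `b < 1 / n`, then rescaling prices turns the AnyPrice share into
the statement that, under any prices of total at most `n`, some bundle of price less than `1` has
value at least `z`. This has to produce `n + 1` bundles of value at least `h`.

An item of value at least `h` is a bundle on its own, and pricing it at `1` shows that the other
items keep the guarantee with `n - 1` in place of `n`. So let all items be worth less than `h`.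
Pricing items in proportion to their value gives a total value above `2 n h`. If only the heaviest
pair and `2 n - 1 ≤ 3 n - 2` other items are priced, at `1 / 3` each, then an affordable bundle has
at most two of them; so even after deleting those others, the items are worth at least `2 h`.

Set the heaviest pair aside for the last two bundles. As long as two other items are together worth
at least `h`, they form a bundle, worth less than `2 h`. Otherwise all other items but the heaviest
are worth less than `h / 2`, and a minimal bundle grown from that one is worth less than `3 h / 2`.
The `h / 2` saved preserves the deletion property, because the remaining items are so small. When
two bundles are left to form, a minimal bundle grown from one item of the pair and avoiding the
other leaves at least `h`.
-/

section Partitions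

variable {ι : Type*} [DecidableEq ι]

theorem IsPartition.const (M : Finset ι) : IsPartition M fun _ : Fin 1 => M :=
  ⟨fun _ => Subset.rfl, fun i j hij => absurd (Subsingleton.elim i j) hij, fun _ hx => ⟨0, hx⟩⟩

theorem IsPartition.cons {M B : Finset ι} {k : ℕ} {P : Fin k → Finset ι} (hB : B ⊆ M)
    (hP : IsPartition (M \ B) P) :
    IsPartition M (Fin.cons B P : Fin (k + 1) → Finset ι) := by
  obtain ⟨hsub, hdisj, hcover⟩ := hP
  have hBP (i : Fin k) : Disjoint B (P i) := disjoint_sdiff.mono_right (hsub i)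
  refine ⟨Fin.cases hB fun i => (hsub i).trans sdiff_subset, ?_, fun x hx => ?_⟩
  · refine Fin.cases (Fin.cases (absurd rfl) fun j _ => hBP j) fun i => ?_
    exact Fin.cases (fun _ => (hBP i).symm) fun j hij => hdisj i j (hij ∘ congrArg Fin.succ)
  · by_cases hxB : x ∈ B
    · exact ⟨0, hxB⟩
    · obtain ⟨i, hi⟩ := hcover x (mem_sdiff.mpr ⟨hx, hxB⟩)
      exact ⟨i.succ, hi⟩

/-- The maximin share of `M` among `k` agents with the same additive valuation, given by the item
values `w`, is at least `t`. -/
def HasMaximinPartition (w : ι → ℝ) (t : ℝ) (k : ℕ) (M : Finset ι) : Prop :=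
  ∃ P : Fin k → Finset ι, IsPartition M P ∧ ∀ i, t ≤ ∑ j ∈ P i, w j

namespace HasMaximinPartition

variable {w : ι → ℝ} {t : ℝ} {k : ℕ} {M B : Finset ι}

theorem one (hM : t ≤ ∑ j ∈ M, w j) : HasMaximinPartition w t 1 M :=
  ⟨fun _ => M, .const M, fun _ => hM⟩

theorem succ (hBM : B ⊆ M) (hB : t ≤ ∑ j ∈ B, w j) (h : HasMaximinPartition w t k (M \ B)) :
    HasMaximinPartition w t (k + 1) M := by
  obtain ⟨P, hP, ht⟩ := h
  exact ⟨Fin.cons B P, hP.cons hBM, Fin.cases hB ht⟩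

end HasMaximinPartition

theorem le_pessimistic_of_isPartition {M : Finset ι} {v : Finset ι → ℝ} {b t : ℝ} {k : ℕ}
    {P : Fin k → Finset ι} (hv : ∀ S ⊆ M, v S ≤ v M) (hb : b ≤ 1) (hk : 0 < k)
    (hkb : 1 / (k : ℝ) ≤ b) (hP : IsPartition M P) (ht : ∀ i, t ≤ v (P i)) :
    t ≤ Pessimistic b v M := by
  refine le_csSup ⟨v M, ?_⟩ ⟨1, k, one_pos, hk, by simpa using hkb, P, hP, fun J hJ => ?_⟩
  · rintro u ⟨l, d, -, hd, hld, Q, hQ, hu⟩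
    have hl : l ≤ d := by
      have := (div_le_one (by positivity)).mp (hld.trans hb)
      exact_mod_cast this
    obtain ⟨J, -, hJ⟩ := exists_subset_card_eq (s := (univ : Finset (Fin d))) (n := l)
      (by simpa using hl)
    exact (hu J hJ).trans (hv _ (biUnion_subset.mpr fun i _ => hQ.1 i))
  · obtain ⟨i, rfl⟩ := card_eq_one.mp hJ
    simpa using ht i

end Partitions

section Bundles

variable {ι : Type*}

theorem exists_heaviest_subset_card {w : ι → ℝ} {M : Finset ι} (hw : ∀ j ∈ M, 0 ≤ w j) {r : ℕ}
    (hr : r ≤ #M) :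
    ∃ D ⊆ M, #D = r ∧ ∀ S ⊆ M, #S ≤ r → ∑ j ∈ S, w j ≤ ∑ j ∈ D, w j := by
  obtain ⟨D, hD, hmax⟩ :=
    exists_max_image (M.powersetCard r) (fun S => ∑ j ∈ S, w j) (powersetCard_nonempty.mpr hr)
  obtain ⟨hDM, hDr⟩ := mem_powersetCard.mp hD
  refine ⟨D, hDM, hDr, fun S hSM hSr => ?_⟩
  obtain ⟨S', hSS', hS'M, hS'r⟩ := exists_subsuperset_card_eq hSM hSr hr
  calc ∑ j ∈ S, w j
      ≤ ∑ j ∈ S', w j := sum_le_sum_of_subset_of_nonneg hSS' fun j hj _ => hw j (hS'M hj)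
    _ ≤ ∑ j ∈ D, w j := hmax S' (mem_powersetCard.mpr ⟨hS'M, hS'r⟩)

variable [DecidableEq ι]

theorem exists_bundle_crossing {α : Type*} [LinearOrder α] {v : Finset ι → α} {t : α}
    {A₀ R : Finset ι} (hA₀R : A₀ ⊆ R) (hA₀ : v A₀ < t) (hR : t ≤ v R) :
    ∃ A, A₀ ⊆ A ∧ A ⊆ R ∧ t ≤ v A ∧ ∃ x ∈ A \ A₀, v (A.erase x) < t := by
  induction R using Finset.strongInduction with
  | H R ih =>
    have hne : A₀ ≠ R := by
      rintro rfl
      exact hR.not_gt hA₀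
    obtain ⟨x, hxR, hxA₀⟩ := exists_of_ssubset (hA₀R.ssubset_of_ne hne)
    rcases lt_or_ge (v (R.erase x)) t with hx | hx
    · exact ⟨R, hA₀R, Subset.rfl, hR, x, mem_sdiff.mpr ⟨hxR, hxA₀⟩, hx⟩
    · obtain ⟨A, hA₀A, hAR, hA⟩ :=
        ih (R.erase x) (erase_ssubset hxR) (subset_erase.mpr ⟨hA₀R, hxA₀⟩) hx
      exact ⟨A, hA₀A, hAR.trans (erase_subset x R), hA⟩

theorem sum_sub_card_mul_le_sum_sdiff {w : ι → ℝ} {c : ℝ} {M H : Finset ι} (hHM : H ⊆ M)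
    (hH : ∀ j ∈ H, w j ≤ c) : ∑ j ∈ M, w j - #H * c ≤ ∑ j ∈ M \ H, w j := by
  have hle : ∑ j ∈ H, w j ≤ #H * c := by
    simpa using sum_le_card_nsmul H w c hH
  linarith [sum_sdiff (f := w) hHM]

end Bundles

section SmallItems

variable {ι : Type*} [DecidableEq ι] {w : ι → ℝ} {h : ℝ} {M : Finset ι} {x₁ x₂ : ι}

theorem HasMaximinPartition.two_of_le_sum_erase (hne : x₁ ≠ x₂)
    (hx₁ : x₁ ∈ M) (hx₂ : x₂ ∈ M) (hh₁ : w x₁ < h) (hh₂ : w x₂ < h) (htotal : 2 * h ≤ ∑ j ∈ M, w j)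
    (hdelete : ∀ x ∈ M \ {x₁, x₂}, 2 * h ≤ ∑ j ∈ M.erase x, w j) :
    HasMaximinPartition w h 2 M := by
  have hM : h ≤ ∑ j ∈ M.erase x₂, w j := by
    linarith [add_sum_erase M w hx₂]
  obtain ⟨A, -, hAM, hA, x, hx, hxA⟩ :=
    exists_bundle_crossing (v := fun S => ∑ j ∈ S, w j) (A₀ := {x₁})
      (singleton_subset_iff.mpr (mem_erase.mpr ⟨hne, hx₁⟩)) (by simpa using hh₁) hM
  obtain ⟨hxmem, hxx₁⟩ := mem_sdiff.mp hx
  have hAM' : A ⊆ M := hAM.trans (erase_subset x₂ M)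
  have hxx₂ : x ≠ x₂ := ne_of_mem_erase (hAM hxmem)
  have hrest := hdelete x (by simpa [hxx₂, hAM' hxmem] using hxx₁)
  refine .succ hAM' hA (.one ?_)
  linarith [sum_sdiff (f := w) hAM', add_sum_erase A w hxmem, add_sum_erase M w (hAM' hxmem)]

theorem exists_pair_or_exists_small_bundle {R : Finset ι} (hh : 0 < h) (hsmall : ∀ j ∈ R, w j < h)
    (hR : h ≤ ∑ j ∈ R, w j) :
    (∃ y₁ ∈ R, ∃ y₂ ∈ R, y₁ ≠ y₂ ∧ h ≤ w y₁ + w y₂) ∨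
      ∃ A ⊆ R, h ≤ ∑ j ∈ A, w j ∧ ∑ j ∈ A, w j ≤ h + h / 2 ∧ ∀ j ∈ R \ A, w j ≤ h / 2 := by
  refine or_iff_not_imp_left.mpr fun hpair => ?_
  push Not at hpair
  have hRne : R.Nonempty := by
    rw [nonempty_iff_ne_empty]
    rintro rfl
    exact hh.not_ge (by simpa using hR)
  obtain ⟨y, hyR, hymax⟩ := exists_max_image R w hRne
  have hhalf (j : ι) (hj : j ∈ R) (hjy : j ≠ y) : w j ≤ h / 2 := by
    linarith [hymax j hj, hpair j hj y hyR hjy]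
  obtain ⟨A, hyA, hAR, hA, x, hx, hxA⟩ :=
    exists_bundle_crossing (v := fun S => ∑ j ∈ S, w j) (singleton_subset_iff.mpr hyR)
      (by simpa using hsmall y hyR) hR
  rw [singleton_subset_iff] at hyA
  obtain ⟨hxmem, hxy⟩ := mem_sdiff.mp hx
  refine ⟨A, hAR, hA, ?_, fun j hj => ?_⟩
  · linarith [add_sum_erase A w hxmem, hhalf x (hAR hxmem) (notMem_singleton.mp hxy)]
  · obtain ⟨hjR, hjA⟩ := mem_sdiff.mp hj
    exact hhalf j hjR (ne_of_mem_of_not_mem hyA hjA).symm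

theorem exists_bundle_forall_le_sum_sdiff {R : Finset ι} (hh : 0 < h) (hRM : R ⊆ M)
    (hsmall : ∀ j ∈ R, w j < h) (hR : h ≤ ∑ j ∈ R, w j) {m : ℕ}
    (htotal : 2 * (m + 2) * h ≤ ∑ j ∈ M, w j)
    (hdelete : ∀ H ⊆ R, #H ≤ 2 * m + 3 → 2 * h ≤ ∑ j ∈ M \ H, w j) :
    ∃ B ⊆ R, h ≤ ∑ j ∈ B, w j ∧ ∑ j ∈ B, w j ≤ 2 * h ∧
      ∀ H ⊆ R \ B, #H ≤ 2 * m + 1 → 2 * h ≤ ∑ j ∈ (M \ B) \ H, w j := by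
  rcases exists_pair_or_exists_small_bundle hh hsmall hR with
    ⟨y₁, hy₁, y₂, hy₂, hne, hpair⟩ | ⟨A, hAR, hA, hAle, hhalf⟩
  · have hpairR : {y₁, y₂} ⊆ R := insert_subset hy₁ (singleton_subset_iff.mpr hy₂)
    have hsum : ∑ j ∈ {y₁, y₂}, w j = w y₁ + w y₂ := sum_pair hne
    refine ⟨{y₁, y₂}, hpairR, hsum ▸ hpair, ?_, fun H hH hcard => ?_⟩
    · linarith [hsmall y₁ hy₁, hsmall y₂ hy₂]
    · rw [sdiff_sdiff_left, sup_eq_union]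
      refine hdelete _ (union_subset hpairR (hH.trans sdiff_subset)) ?_
      calc #({y₁, y₂} ∪ H)
          ≤ #{y₁, y₂} + #H := card_union_le _ _
        _ ≤ 2 * m + 3 := by rw [card_pair hne]; lia
  · refine ⟨A, hAR, hA, by linarith, fun H hH hcard => ?_⟩
    have hmh : 0 ≤ m * h := by positivity
    have hcost : #H * (h / 2) ≤ (2 * m + 1) * (h / 2) := by
      gcongr
      exact_mod_cast hcard
    have hrest := sum_sub_card_mul_le_sum_sdiff
      (hH.trans (sdiff_subset_sdiff hRM Subset.rfl)) fun j hj => hhalf j (hH hj)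
    linarith [sum_sdiff (f := w) (hAR.trans hRM)]

theorem HasMaximinPartition.add_two_of_le_sum_sdiff (hh : 0 < h) (hne : x₁ ≠ x₂)
    (m : ℕ) (hx₁ : x₁ ∈ M) (hx₂ : x₂ ∈ M) (hsmall : ∀ j ∈ M, w j < h)
    (htotal : 2 * (m + 1) * h ≤ ∑ j ∈ M, w j)
    (hdelete : ∀ H ⊆ M \ {x₁, x₂}, #H ≤ 2 * m + 1 → 2 * h ≤ ∑ j ∈ M \ H, w j) :
    HasMaximinPartition w h (m + 2) M := by
  induction m generalizing M with
  | zero =>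
    refine two_of_le_sum_erase hne hx₁ hx₂ (hsmall x₁ hx₁) (hsmall x₂ hx₂)
      (by simpa using htotal) fun x hx => ?_
    simpa [sdiff_singleton_eq_erase] using hdelete {x} (singleton_subset_iff.mpr hx) (by simp)
  | succ m ih =>
    push_cast at htotal
    have hmh : 0 ≤ m * h := by positivity
    have hpairM : {x₁, x₂} ⊆ M := insert_subset hx₁ (singleton_subset_iff.mpr hx₂)
    have hothers : h ≤ ∑ j ∈ M \ {x₁, x₂}, w j := by
      linarith [sum_sdiff (f := w) hpairM, sum_pair (f := w) hne, hsmall x₁ hx₁, hsmall x₂ hx₂]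
    obtain ⟨B, hBothers, hB, hBle, hdeleteB⟩ :=
      exists_bundle_forall_le_sum_sdiff hh sdiff_subset (fun j hj => hsmall j (sdiff_subset hj))
        hothers (m := m) (by linarith) hdelete
    obtain ⟨hBM, hdisj⟩ := subset_sdiff.mp hBothers
    have hmem (x : ι) (hx : x ∈ ({x₁, x₂} : Finset ι)) : x ∈ M \ B :=
      mem_sdiff.mpr ⟨hpairM hx, disjoint_right.mp hdisj hx⟩
    refine .succ hBM hB (ih (hmem x₁ (by simp)) (hmem x₂ (by simp))
      (fun j hj => hsmall j (sdiff_subset hj)) ?_ ?_)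
    · linarith [sum_sdiff (f := w) hBM]
    · rwa [sdiff_right_comm]

end SmallItems

section AnyPrice

variable {ι : Type*}

theorem exists_affordable_aps_le {M : Finset ι} (v : Finset ι → ℝ) {b : ℝ} (hb : 0 ≤ b) {p : ι → ℝ}
    (hp : ∀ j ∈ M, 0 ≤ p j) (hsum : ∑ j ∈ M, p j = 1) :
    ∃ S ⊆ M, ∑ j ∈ S, p j ≤ b ∧ APS b v M ≤ v S := by
  let affordable (q : ι → ℝ) : Set ℝ := {u | ∃ S, S ⊆ M ∧ ∑ j ∈ S, q j ≤ b ∧ u = v S}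
  have hfinite (q : ι → ℝ) : (affordable q).Finite := by
    refine (M.powerset.finite_toSet.image v).subset ?_
    rintro u ⟨S, hS, -, rfl⟩
    exact ⟨S, mem_powerset.mpr hS, rfl⟩
  have hempty (q : ι → ℝ) : v ∅ ∈ affordable q := ⟨∅, empty_subset M, by simpa using hb, rfl⟩
  obtain ⟨S, hS, hpS, hvS⟩ := Set.Nonempty.csSup_mem ⟨_, hempty p⟩ (hfinite p)
  refine ⟨S, hS, hpS, hvS ▸ csInf_le ⟨v ∅, ?_⟩ ⟨p, hp, hsum, rfl⟩⟩
  rintro t ⟨q, -, -, rfl⟩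
  exact le_csSup (hfinite q).bddAbove (hempty q)

theorem aps_le_sum {M : Finset ι} {w : ι → ℝ} (hw : ∀ j ∈ M, 0 ≤ w j) {b : ℝ} (hb : 0 ≤ b) :
    APS b (fun S => ∑ j ∈ S, w j) M ≤ ∑ j ∈ M, w j := by
  rcases M.eq_empty_or_nonempty with rfl | hM
  · simp [APS]
  · have hcard : (#M : ℝ) ≠ 0 := by exact_mod_cast hM.card_ne_zero
    obtain ⟨S, hS, -, hle⟩ := exists_affordable_aps_le (M := M) (fun S => ∑ j ∈ S, w j) hb
      (p := fun _ => 1 / #M) (fun _ _ => by positivity) (by simp [hcard])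
    exact hle.trans (sum_le_sum_of_subset_of_nonneg hS fun j hj _ => hw j hj)

/-- The guarantee that an AnyPrice share of `z` gives to an entitlement exceeding `1 / n`, with
prices rescaled so that the budget is `1` and the items cost at most `n` in total. Stating it
without dividing by the total price also covers `n = 0` and free items. -/
def AnyPriceGuarantee (w : ι → ℝ) (z : ℝ) (n : ℕ) (M : Finset ι) : Prop :=
  ∀ q : ι → ℝ, (∀ j ∈ M, 0 ≤ q j) → ∑ j ∈ M, q j ≤ n →
    ∃ S ⊆ M, ∑ j ∈ S, q j < 1 ∧ z ≤ ∑ j ∈ S, w j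

theorem anyPriceGuarantee_aps {M : Finset ι} {w : ι → ℝ} (hw : ∀ j ∈ M, 0 ≤ w j) {b : ℝ}
    (hb : 0 ≤ b) {n : ℕ} (hbn : b * n < 1) :
    AnyPriceGuarantee w (APS b (fun S => ∑ j ∈ S, w j) M) n M := by
  intro q hq hqn
  rcases (sum_nonneg hq).eq_or_lt' with hzero | hpos
  · exact ⟨M, Subset.rfl, by simp [hzero], aps_le_sum hw hb⟩
  · obtain ⟨S, hS, hqS, hle⟩ := exists_affordable_aps_le (fun S => ∑ j ∈ S, w j) hb
      (p := fun j => q j / ∑ i ∈ M, q i) (fun j hj => div_nonneg (hq j hj) hpos.le)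
      (by rw [← sum_div, div_self hpos.ne'])
    refine ⟨S, hS, ?_, hle⟩
    rw [← sum_div, div_le_iff₀ hpos] at hqS
    calc ∑ j ∈ S, q j
        ≤ b * ∑ j ∈ M, q j := hqS
      _ ≤ b * n := by gcongr
      _ < 1 := hbn

namespace AnyPriceGuarantee

variable {w : ι → ℝ} {z : ℝ} {m n : ℕ} {M : Finset ι}

theorem mono (hmn : m ≤ n) (hG : AnyPriceGuarantee w z n M) : AnyPriceGuarantee w z m M :=
  fun q hq hqm => hG q hq (hqm.trans (by exact_mod_cast hmn))

theorem le_sum (hw : ∀ j ∈ M, 0 ≤ w j) (hG : AnyPriceGuarantee w z n M) : z ≤ ∑ j ∈ M, w j := by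
  obtain ⟨S, hS, -, hzS⟩ := hG 0 (fun _ _ => le_rfl) (by simp)
  exact hzS.trans (sum_le_sum_of_subset_of_nonneg hS fun j hj _ => hw j hj)

theorem mul_lt_sum (hw : ∀ j ∈ M, 0 ≤ w j) (hz : 0 < z) (hG : AnyPriceGuarantee w z n M) :
    n * z < ∑ j ∈ M, w j := by
  by_contra! hle
  obtain ⟨S, -, hS, hzS⟩ := hG (fun j => w j / z) (fun j hj => div_nonneg (hw j hj) hz.le)
    (by rwa [← sum_div, div_le_iff₀ hz])
  rw [← sum_div, div_lt_one hz] at hS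
  exact hS.not_ge hzS

variable [DecidableEq ι]

theorem erase (hG : AnyPriceGuarantee w z (n + 1) M) {x : ι} (hx : x ∈ M) :
    AnyPriceGuarantee w z n (M.erase x) := by
  intro q hq hqn
  have hupdate {S : Finset ι} (hxS : x ∉ S) : ∑ j ∈ S, Function.update q x 1 j = ∑ j ∈ S, q j :=
    sum_update_of_notMem hxS q 1
  have hnonneg : ∀ j ∈ M, 0 ≤ Function.update q x 1 j := fun j hj => by
    rcases eq_or_ne j x with rfl | hjx
    · simp
    · simpa [hjx] using hq j (mem_erase.mpr ⟨hjx, hj⟩)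
  have htotal : ∑ j ∈ M, Function.update q x 1 j ≤ (n + 1 : ℕ) := by
    rw [← add_sum_erase M _ hx, hupdate (notMem_erase x M), Function.update_self]
    push_cast
    linarith
  obtain ⟨S, hS, hlt, hzS⟩ := hG _ hnonneg htotal
  have hxS : x ∉ S := fun hxS => by
    have := single_le_sum (fun j hj => hnonneg j (hS hj)) hxS
    rw [Function.update_self] at this
    exact this.not_gt hlt
  exact ⟨S, subset_erase.mpr ⟨hS, hxS⟩, hupdate hxS ▸ hlt, hzS⟩

theorem exists_card_inter_le (hG : AnyPriceGuarantee w z n M) {F : Finset ι} {r : ℕ}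
    (hcard : #F ≤ (r + 1) * n) : ∃ S ⊆ M, #(S ∩ F) ≤ r ∧ z ≤ ∑ j ∈ S, w j := by
  have hprice (S : Finset ι) :
      ∑ j ∈ S, (if j ∈ F then 1 / ((r : ℝ) + 1) else 0) = #(S ∩ F) / ((r : ℝ) + 1) := by
    rw [sum_ite_mem, sum_const, nsmul_eq_mul, mul_one_div]
  obtain ⟨S, hS, hlt, hzS⟩ := hG (fun j => if j ∈ F then 1 / ((r : ℝ) + 1) else 0)
    (fun j _ => by positivity) (by
      rw [hprice, div_le_iff₀' (by positivity)]
      exact_mod_cast (card_le_card inter_subset_right).trans hcard)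
  refine ⟨S, hS, ?_, hzS⟩
  rw [hprice, div_lt_one (by positivity)] at hlt
  exact Nat.lt_succ_iff.mp (by exact_mod_cast hlt)

theorem le_sum_sdiff (hw : ∀ j ∈ M, 0 ≤ w j) (hG : AnyPriceGuarantee w z n M) {D H : Finset ι}
    {r : ℕ} (hDM : D ⊆ M) (hD : ∀ S ⊆ M, #S ≤ r → ∑ j ∈ S, w j ≤ ∑ j ∈ D, w j)
    (hH : H ⊆ M \ D) (hcard : #D + #H ≤ (r + 1) * n) : z ≤ ∑ j ∈ M \ H, w j := by
  obtain ⟨S, hS, hSr, hzS⟩ := hG.exists_card_inter_le ((card_union_le D H).trans hcard)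
  have hDH : D ⊆ M \ H := subset_sdiff.mpr ⟨hDM, (subset_sdiff.mp hH).2.symm⟩
  calc z
      ≤ ∑ j ∈ S, w j := hzS
    _ = ∑ j ∈ S ∩ (D ∪ H), w j + ∑ j ∈ S \ (D ∪ H), w j :=
        (sum_inter_add_sum_sdiff S (D ∪ H) w).symm
    _ ≤ ∑ j ∈ D, w j + ∑ j ∈ M \ (D ∪ H), w j :=
        add_le_add (hD _ (inter_subset_left.trans hS) hSr) <|
          sum_le_sum_of_subset_of_nonneg (sdiff_subset_sdiff hS Subset.rfl)
            fun j hj _ => hw j (sdiff_subset hj)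
    _ = ∑ j ∈ M \ H, w j := by
        rw [add_comm, union_comm, ← sup_eq_union, ← sdiff_sdiff_left, sum_sdiff hDH]

theorem hasMaximinPartition_of_forall_lt {h : ℝ} (hw : ∀ j ∈ M, 0 ≤ w j) (hh : 0 < h)
    (hsmall : ∀ j ∈ M, w j < h) (hG : AnyPriceGuarantee w (2 * h) (n + 1) M) :
    HasMaximinPartition w h (n + 2) M := by
  have htotal : 2 * (n + 1) * h < ∑ j ∈ M, w j := by
    have := hG.mul_lt_sum hw (by positivity)
    push_cast at this
    linarith
  have hM : 2 ≤ #M := by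
    by_contra! hlt
    have hcard : (#M : ℝ) ≤ 1 := by exact_mod_cast Nat.lt_succ_iff.mp hlt
    have hle : ∑ j ∈ M, w j ≤ #M * h := by
      simpa using sum_le_card_nsmul M w h fun j hj => (hsmall j hj).le
    nlinarith [mul_nonneg n.cast_nonneg hh.le]
  obtain ⟨D, hDM, hDcard, hD⟩ := exists_heaviest_subset_card hw hM
  obtain ⟨x₁, x₂, hne, rfl⟩ := card_eq_two.mp hDcard
  exact .add_two_of_le_sum_sdiff hh hne n (hDM (by simp)) (hDM (by simp)) hsmall
    htotal.le fun H hH hcard => hG.le_sum_sdiff hw hDM hD hH (by lia)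

theorem hasMaximinPartition {h : ℝ} (hw : ∀ j ∈ M, 0 ≤ w j)
    (hG : AnyPriceGuarantee w (2 * h) n M) : HasMaximinPartition w h (n + 1) M := by
  induction n generalizing M with
  | zero =>
    exact .one (by linarith [hG.le_sum hw, sum_nonneg hw])
  | succ n ih =>
    rcases le_or_gt h 0 with hh | hh
    · exact .succ (empty_subset M) (by simpa using hh) (by simpa using ih hw (hG.mono n.le_succ))
    by_cases hlarge : ∃ x ∈ M, h ≤ w x
    · obtain ⟨x, hxM, hx⟩ := hlarge
      refine .succ (singleton_subset_iff.mpr hxM) (by simpa using hx) ?_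
      rw [sdiff_singleton_eq_erase]
      exact ih (fun j hj => hw j (mem_of_mem_erase hj)) (hG.erase hxM)
    · push Not at hlarge
      exact hG.hasMaximinPartition_of_forall_lt hw hh hlarge

end AnyPriceGuarantee

theorem hasMaximinPartition_aps_div_two [DecidableEq ι] {M : Finset ι} {w : ι → ℝ}
    (hw : ∀ j ∈ M, 0 ≤ w j) {b : ℝ} (hb : 0 ≤ b) {n : ℕ} (hbn : b * n < 1) :
    HasMaximinPartition w (APS b (fun S => ∑ j ∈ S, w j) M / 2) (n + 1) M := by
  refine AnyPriceGuarantee.hasMaximinPartition hw ?_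
  rw [mul_div_cancel₀ _ two_ne_zero]
  exact anyPriceGuarantee_aps hw hb hbn

end AnyPrice

/-- For additive valuations, twice the pessimistic share is at least the AnyPrice
share; moreover, for the smallest integer `k` with `1/k ≤ b` (namely `k = ⌈1/b⌉`),
`M` can be partitioned into `k` bundles each of value at least half the AnyPrice share. -/
theorem two_pessimistic_ge_aps {ι : Type*} [DecidableEq ι] (M : Finset ι)
    (w : ι → ℝ) (hw : ∀ j ∈ M, 0 ≤ w j)
    (b : ℝ) (hb0 : 0 < b) (hb1 : b ≤ 1) :
    APS b (fun S => ∑ j ∈ S, w j) M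
      ≤ 2 * Pessimistic b (fun S => ∑ j ∈ S, w j) M ∧
    ∃ P : Fin ⌈1 / b⌉₊ → Finset ι, IsPartition M P ∧
      ∀ i, APS b (fun S => ∑ j ∈ S, w j) M / 2 ≤ ∑ j ∈ P i, w j := by
  have hceil : 0 < ⌈1 / b⌉₊ := Nat.ceil_pos.mpr (one_div_pos.mpr hb0)
  have hceil_le : 1 / (⌈1 / b⌉₊ : ℝ) ≤ b :=
    (one_div_le hb0 (by exact_mod_cast hceil)).mp (Nat.le_ceil _)
  have hpart : HasMaximinPartition w (APS b (fun S => ∑ j ∈ S, w j) M / 2) ⌈1 / b⌉₊ M := by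
    obtain ⟨n, hn⟩ := Nat.exists_eq_succ_of_ne_zero hceil.ne'
    have hbn : b * n < 1 := (lt_div_iff₀' hb0).mp (Nat.lt_ceil.mp (hn ▸ n.lt_succ_self))
    rw [hn]
    exact hasMaximinPartition_aps_div_two hw hb0.le hbn
  obtain ⟨P, hP, hPv⟩ := hpart
  have hle := le_pessimistic_of_isPartition (v := fun S => ∑ j ∈ S, w j)
    (fun S hS => sum_le_sum_of_subset_of_nonneg hS fun j hj _ => hw j hj) hb1 hceil hceil_le hP hPv
  exact ⟨by linarith, P, hP, hPv⟩
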